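/- Let W ⊆ ℝ^D be a nonempty closed convex set, 0 < μ ≤ L, and let g_1,…,g_n : ℝ^D → ℝ be differentiable, each μ-strongly convex with L-Lipschitz continuous gradient; set g = (1/n)·Σ_i g_i and let w_* be the minimizer of g over W. Fix w^t ∈ W and memory points φ_1^t,…,φ_n^t ∈ ℝ^D, and let Θ_1,…,Θ_n ∈ ℝ^D be error vectors each of whose components has absolute value at most θ, where θ > 0 satisfies θ ≤ min{ 1/√D , μ·‖w^t − w_*‖² / (2√D·(5/(18L) + 2‖w^t − w_*‖)) }. Set α = 8, γ = 1/((1+α)·(1+θ√D)·L), c = 2/(n·γ), and 1/τ = min{1/(2n), γμ/2}. For each j ∈ {1,…,n}, let φ^{t+1,j} be the tuple obtained from (φ_1^t,…,φ_n^t) by replacing the j-th entry with w^t, let v^{t+1,j} = w^t − γ·[∇g_j(w^t) − ∇g_j(φ_j^t) + (1/n)·Σ_{i=1}^n ∇g_i(φ_i^t)] + γ·Θ_j, and let w^{t+1,j} = Π_W(v^{t+1,j}) be the metric projection of v^{t+1,j} onto W. Define the Lyapunov function T(w, φ) = (1/n)·Σ_i g_i(φ_i) − g(w_*) − (1/n)·Σ_i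 ⟨∇g_i(w_*), φ_i − w_*⟩ + c·‖w − w_*‖². Then (1/n)·Σ_{j=1}^n T(w^{t+1,j}, φ^{t+1,j}) ≤ (1 − 1/τ)·T(w^t, (φ_1^t,…,φ_n^t)). -/

import Mathlib

open scoped RealInnerProductSpace

/-!
The first part of the Lyapunov function is the average Bregman divergence `H` of the memory points
from the minimizer `w_*`; write `d = ‖w - w_*‖`, `K` for the average divergence of `w` from `w_*`,
`M` for the average of `⟪∇g_j(w) - ∇g_j(w_*), w - w_*⟫`, and `q` for the bound on the norm of the
gradient errors. Refreshing one random memory entry changes `H` by `(K - H) / n` on average, and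
`K ≤ M - μ d² / 2` by strong convexity.
First-order optimality makes `w_*` the projection of `w_* - γ ∇g(w_*)`, so non-expansiveness reduces
the new squared distance to a second-moment bound for the SAGA gradient estimator. That bound,
obtained from the variance decomposition, Young's inequality and co-coercivity, makes `d²` change on
average by at most `(γ / 2) (H / 2 - M - 2 μ d² + q (4 d + 2 / (9 L)))`. With the weight
`c = 2 / (n γ)` the terms `M` cancel, and the remaining negative multiples of `H` and `d²` pay
for the contraction and for the errors.
-/

open scoped BigOperators
open Finset

section Norm

variable {E : Type*} [SeminormedAddCommGroup E]

lemma norm_sub_sq_le_of_norm_le {x e : E} {q : ℝ} (he : ‖e‖ ≤ q) :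
    ‖x - e‖ ^ 2 ≤ (1 + q) * ‖x‖ ^ 2 + q * (1 + q) := by
  have hq : 0 ≤ q := (norm_nonneg e).trans he
  calc ‖x - e‖ ^ 2 ≤ (‖x‖ + q) ^ 2 := by gcongr; exact (norm_sub_le x e).trans (by gcongr)
    _ ≤ (1 + q) * ‖x‖ ^ 2 + q * (1 + q) := by nlinarith [mul_nonneg hq (sq_nonneg (‖x‖ - 1))]

lemma norm_sub_sq_le_young {β : ℝ} (hβ : 0 < β) (x y : E) :
    ‖x - y‖ ^ 2 ≤ (1 + β) * ‖x‖ ^ 2 + (1 + β⁻¹) * ‖y‖ ^ 2 := by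
  have hsq : 0 ≤ β⁻¹ * (β * ‖x‖ - ‖y‖) ^ 2 := by positivity
  calc ‖x - y‖ ^ 2 ≤ (‖x‖ + ‖y‖) ^ 2 := by gcongr; exact norm_sub_le x y
    _ = (1 + β) * ‖x‖ ^ 2 + (1 + β⁻¹) * ‖y‖ ^ 2 - β⁻¹ * (β * ‖x‖ - ‖y‖) ^ 2 := by
        field_simp; ring
    _ ≤ _ := sub_le_self _ hsq

end Norm

section Bregman

variable {E : Type*} [NormedAddCommGroup E] [InnerProductSpace ℝ E] {f : E → ℝ} {f' : E → E}
  {μ L : ℝ}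

/-- The Bregman divergence `f u - f v - ⟪∇f v, u - v⟫`, with the gradient `f'` of `f` passed
explicitly. Strong convexity and smoothness are quadratic lower and upper bounds for it. -/
def bregmanDiv (f : E → ℝ) (f' : E → E) (u v : E) : ℝ :=
  f u - f v - ⟪f' v, u - v⟫

lemma bregmanDiv_add_bregmanDiv_swap (f : E → ℝ) (f' : E → E) (u v : E) :
    bregmanDiv f f' u v + bregmanDiv f f' v u = ⟪f' u - f' v, u - v⟫ := by
  rw [bregmanDiv, bregmanDiv, ← neg_sub u v, inner_neg_right, inner_sub_left]
  ring

lemma bregmanDiv_eq_add_bregmanDiv_add_inner (f : E → ℝ) (f' : E → E) (u v w : E) :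
    bregmanDiv f f' w v = bregmanDiv f f' w u + bregmanDiv f f' u v + ⟪f' u - f' v, w - u⟫ := by
  simp only [bregmanDiv, inner_sub_left, inner_sub_right]
  ring

lemma bregmanDiv_sub_mul_norm_sq (f : E → ℝ) (f' : E → E) (μ : ℝ) (u v : E) :
    bregmanDiv (fun x => f x - μ / 2 * ‖x‖ ^ 2) (fun x => f' x - μ • x) u v =
      bregmanDiv f f' u v - μ / 2 * ‖u - v‖ ^ 2 := by
  simp only [bregmanDiv, inner_sub_left, inner_sub_right, real_inner_smul_left,
    norm_sub_sq_real, real_inner_self_eq_norm_sq, real_inner_comm u v]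
  ring

lemma bregmanDiv_le_of_gradient_lipschitz [CompleteSpace E]
    (hdiff : ∀ x, HasGradientAt f (f' x) x) (hlip : ∀ u v, ‖f' u - f' v‖ ≤ L * ‖u - v‖) (u v : E) :
    bregmanDiv f f' u v ≤ L / 2 * ‖u - v‖ ^ 2 := by
  let p : ℝ → E := fun t => v + t • (u - v)
  have hp (t : ℝ) : HasDerivAt p (u - v) t := by
    simpa [p] using ((hasDerivAt_id t).smul_const (u - v)).const_add v
  have hD (t : ℝ) : HasDerivAt (fun t => bregmanDiv f f' (p t) v) ⟪f' (p t) - f' v, u - v⟫ t := by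
    have hf := (hdiff (p t)).hasFDerivAt.comp_hasDerivAt t (hp t)
    have hinner := (innerSL ℝ (f' v)).hasFDerivAt.comp_hasDerivAt t ((hp t).sub_const v)
    rw [inner_sub_left]
    exact (hf.sub_const (f v)).sub hinner
  have hB (t : ℝ) : HasDerivAt (fun t => L / 2 * ‖u - v‖ ^ 2 * t ^ 2) (L * ‖u - v‖ ^ 2 * t) t :=
    ((hasDerivAt_pow 2 t).const_mul _).congr_deriv (by push_cast; ring)
  have hslope : ∀ t ∈ Set.Ico (0 : ℝ) 1, ⟪f' (p t) - f' v, u - v⟫ ≤ L * ‖u - v‖ ^ 2 * t := by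
    intro t ht
    have hpv : ‖p t - v‖ = t * ‖u - v‖ := by
      rw [add_sub_cancel_left, norm_smul, Real.norm_of_nonneg ht.1]
    calc ⟪f' (p t) - f' v, u - v⟫ ≤ ‖f' (p t) - f' v‖ * ‖u - v‖ := real_inner_le_norm _ _
      _ ≤ L * ‖p t - v‖ * ‖u - v‖ := by gcongr; exact hlip _ _
      _ = L * ‖u - v‖ ^ 2 * t := by rw [hpv]; ring
  have hle := image_le_of_deriv_right_le_deriv_boundary
    (fun t _ => (hD t).continuousAt.continuousWithinAt) (fun t _ => (hD t).hasDerivWithinAt)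
    (by simp [p, bregmanDiv]) (fun t _ => (hB t).continuousAt.continuousWithinAt)
    (fun t _ => (hB t).hasDerivWithinAt) hslope (Set.right_mem_Icc.2 zero_le_one)
  simpa [p] using hle

lemma norm_gradient_sub_sq_le_bregmanDiv (hL : 0 ≤ L) (hconv : ∀ u v, 0 ≤ bregmanDiv f f' u v)
    (hsmooth : ∀ u v, bregmanDiv f f' u v ≤ L / 2 * ‖u - v‖ ^ 2) (u v : E) :
    ‖f' u - f' v‖ ^ 2 ≤ 2 * L * bregmanDiv f f' u v := by
  set δ := f' u - f' v with hδ
  have hquad (s : ℝ) :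
      0 ≤ L / 2 * ‖δ‖ ^ 2 * (s * s) + -‖δ‖ ^ 2 * s + bregmanDiv f f' u v := by
    have hsm := hsmooth (u - s • δ) u
    have hthree := bregmanDiv_eq_add_bregmanDiv_add_inner f f' u v (u - s • δ)
    rw [sub_sub_cancel_left, ← hδ, inner_neg_right, real_inner_smul_right,
      real_inner_self_eq_norm_sq] at hthree
    rw [sub_sub_cancel_left, norm_neg, norm_smul, mul_pow, Real.norm_eq_abs, sq_abs] at hsm
    linarith [hconv (u - s • δ) v]
  have hdiscrim := discrim_le_zero hquad
  rw [discrim] at hdiscrim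
  rcases (sq_nonneg ‖δ‖).eq_or_lt' with hzero | hpos
  · rw [hzero]
    exact mul_nonneg (by positivity) (hconv u v)
  · refine le_of_mul_le_mul_left ?_ hpos
    linarith

lemma mul_norm_sq_le_inner_gradient_sub (hsc : ∀ u v, μ / 2 * ‖u - v‖ ^ 2 ≤ bregmanDiv f f' u v)
    (u v : E) : μ * ‖u - v‖ ^ 2 ≤ ⟪f' u - f' v, u - v⟫ := by
  have huv := hsc u v
  have hvu := hsc v u
  rw [norm_sub_rev] at hvu
  linarith [bregmanDiv_add_bregmanDiv_swap f f' u v]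

lemma mul_inner_le_norm_sq {δ x : E} (hμ : 0 ≤ μ) (h : μ * ‖x‖ ^ 2 ≤ ⟪δ, x⟫) :
    μ * ⟪δ, x⟫ ≤ ‖δ‖ ^ 2 := by
  have hsq : ‖δ - μ • x‖ ^ 2 = ‖δ‖ ^ 2 - 2 * (μ * ⟪δ, x⟫) + μ * (μ * ‖x‖ ^ 2) := by
    rw [norm_sub_sq_real, real_inner_smul_right, norm_smul, mul_pow, Real.norm_eq_abs, sq_abs]
    ring
  linarith [sq_nonneg ‖δ - μ • x‖, mul_le_mul_of_nonneg_left h hμ]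

-- Apply co-coercivity to `f - (μ / 2) ‖·‖²`, which is convex and `(L - μ)`-smooth.
lemma norm_gradient_sub_sq_add_le_inner (hμL : μ ≤ L)
    (hsc : ∀ u v, μ / 2 * ‖u - v‖ ^ 2 ≤ bregmanDiv f f' u v)
    (hsmooth : ∀ u v, bregmanDiv f f' u v ≤ L / 2 * ‖u - v‖ ^ 2) (u v : E) :
    ‖f' u - f' v‖ ^ 2 + μ * L * ‖u - v‖ ^ 2 ≤ (L + μ) * ⟪f' u - f' v, u - v⟫ := by
  let h : E → ℝ := fun x => f x - μ / 2 * ‖x‖ ^ 2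
  let h' : E → E := fun x => f' x - μ • x
  have hdiv (x y : E) : bregmanDiv h h' x y = bregmanDiv f f' x y - μ / 2 * ‖x - y‖ ^ 2 :=
    bregmanDiv_sub_mul_norm_sq f f' μ x y
  have hcoco (x y : E) : ‖h' x - h' y‖ ^ 2 ≤ 2 * (L - μ) * bregmanDiv h h' x y := by
    refine norm_gradient_sub_sq_le_bregmanDiv (sub_nonneg.2 hμL) (fun x y => ?_) (fun x y => ?_) x y
    · rw [hdiv]; linarith [hsc x y]
    · rw [hdiv]; linarith [hsmooth x y]
  have huv := hcoco u v
  have hvu := hcoco v u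
  rw [norm_sub_rev] at hvu
  have hsub : h' u - h' v = (f' u - f' v) - μ • (u - v) := by
    simp only [h', smul_sub]; abel
  have hsum : ‖h' u - h' v‖ ^ 2 ≤ (L - μ) * ⟪h' u - h' v, u - v⟫ := by
    rw [← bregmanDiv_add_bregmanDiv_swap h h' u v]; linarith
  rw [hsub, norm_sub_sq_real, inner_sub_left (f' u - f' v), real_inner_smul_right,
    real_inner_smul_left, real_inner_self_eq_norm_sq, norm_smul, mul_pow, Real.norm_eq_abs,
    sq_abs] at hsum
  linarith

end Bregman

section Projection

variable {E : Type*} [NormedAddCommGroup E] [InnerProductSpace ℝ E] {W : Set E}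

lemma inner_gradient_sub_nonneg_of_isMinOn [CompleteSpace E] (hW : Convex ℝ W) {f : E → ℝ}
    {f' x w : E} (hf : HasGradientAt f f' x) (hmin : IsMinOn f W x) (hx : x ∈ W) (hw : w ∈ W) :
    0 ≤ ⟪f', w - x⟫ := by
  simpa using hmin.localize.hasFDerivWithinAt_nonneg hf.hasFDerivAt.hasFDerivWithinAt
    (sub_mem_posTangentConeAt_of_segment_subset (hW.segment_subset hx hw))

lemma inner_sub_nearest_nonpos (hW : Convex ℝ W) {y p w : E} (hp : p ∈ W)
    (hnear : ∀ u ∈ W, ‖y - p‖ ≤ ‖y - u‖) (hw : w ∈ W) : ⟪y - p, w - p⟫ ≤ 0 := by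
  have : Nonempty W := ⟨⟨p, hp⟩⟩
  have hinf : ‖y - p‖ = ⨅ u : W, ‖y - u‖ :=
    le_antisymm (le_ciInf fun u => hnear u u.2)
      (ciInf_le (f := fun u : W => ‖y - u‖)
        ⟨0, Set.forall_mem_range.2 fun _ => norm_nonneg _⟩ ⟨p, hp⟩)
  exact (norm_eq_iInf_iff_real_inner_le_zero hW hp).1 hinf w hw

-- The hypothesis on `z` says that `s` is the projection of `s - z`.
lemma norm_nearest_sub_le (hW : Convex ℝ W) {y p s z : E} (hp : p ∈ W)
    (hnear : ∀ u ∈ W, ‖y - p‖ ≤ ‖y - u‖) (hs : s ∈ W) (hz : ∀ w ∈ W, 0 ≤ ⟪z, w - s⟫) :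
    ‖p - s‖ ≤ ‖y - (s - z)‖ := by
  have hps : ‖p - s‖ * ‖p - s‖ ≤ ‖y - (s - z)‖ * ‖p - s‖ :=
    calc ‖p - s‖ * ‖p - s‖ = ⟪p - s, p - s⟫ := (real_inner_self_eq_norm_mul_norm _).symm
      _ = ⟪y - (s - z), p - s⟫ + ⟪y - p, s - p⟫ - ⟪z, p - s⟫ := by
        simp only [inner_sub_left, inner_sub_right]; ring
      _ ≤ ⟪y - (s - z), p - s⟫ := by
        linarith [inner_sub_nearest_nonpos hW hp hnear hs, hz p hp]
      _ ≤ ‖y - (s - z)‖ * ‖p - s‖ := real_inner_le_norm _ _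
  rcases (norm_nonneg (p - s)).eq_or_lt' with hzero | hpos
  · rw [hzero]; exact norm_nonneg _
  · exact le_of_mul_le_mul_right hps hpos

lemma norm_nearest_step_sub_sq_le (hW : Convex ℝ W) {x v e p s m : E} {γ q : ℝ} (hγ : 0 ≤ γ)
    (he : ‖e‖ ≤ q) (hp : p ∈ W) (hnear : ∀ u ∈ W, ‖x - γ • v + γ • e - p‖ ≤ ‖x - γ • v + γ • e - u‖)
    (hs : s ∈ W) (hm : ∀ w ∈ W, 0 ≤ ⟪m, w - s⟫) :
    ‖p - s‖ ^ 2 ≤ ‖x - s‖ ^ 2 - 2 * γ * ⟪v - m, x - s⟫ + 2 * γ * (q * ‖x - s‖) +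
      γ ^ 2 * ((1 + q) * ‖v - m‖ ^ 2 + q * (1 + q)) := by
  have hz : ∀ w ∈ W, 0 ≤ ⟪γ • m, w - s⟫ := fun w hw => by
    rw [real_inner_smul_left]; exact mul_nonneg hγ (hm w hw)
  have hinner : ⟪e, x - s⟫ ≤ q * ‖x - s‖ := (real_inner_le_norm _ _).trans (by gcongr)
  calc ‖p - s‖ ^ 2 ≤ ‖x - γ • v + γ • e - (s - γ • m)‖ ^ 2 := by
        gcongr; exact norm_nearest_sub_le hW hp hnear hs hz
    _ = ‖(x - s) - γ • ((v - m) - e)‖ ^ 2 := by congr 2; module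
    _ = ‖x - s‖ ^ 2 - 2 * γ * ⟪v - m, x - s⟫ + 2 * γ * ⟪e, x - s⟫ +
          γ ^ 2 * ‖(v - m) - e‖ ^ 2 := by
        rw [norm_sub_sq_real, real_inner_smul_right, norm_smul, mul_pow, Real.norm_eq_abs, sq_abs,
          real_inner_comm, inner_sub_left]
        ring
    _ ≤ _ := by gcongr; exact norm_sub_sq_le_of_norm_le he

end Projection

section Average

variable {ι E : Type*} [Fintype ι] [NormedAddCommGroup E] [InnerProductSpace ℝ E]

/-- The uniform average of a finite family of vectors. The notation `𝔼` is kept for real families: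
it needs a `ℚ≥0`-module structure, which is not inferred from a real vector space. -/
noncomputable def avg (a : ι → E) : E :=
  (Fintype.card ι : ℝ)⁻¹ • ∑ i, a i

lemma avg_sub (a b : ι → E) : avg (fun i => a i - b i) = avg a - avg b := by
  simp only [avg, sum_sub_distrib, smul_sub]

lemma inner_avg_left (a : ι → E) (x : E) : ⟪avg a, x⟫ = 𝔼 i, ⟪a i, x⟫ := by
  rw [avg, real_inner_smul_left, sum_inner, Fintype.expect_eq_sum_div_card, div_eq_inv_mul]

lemma hasGradientAt_expect [CompleteSpace E] {g : ι → E → ℝ} {g' : ι → E} {x : E}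
    (hg : ∀ i, HasGradientAt (g i) (g' i) x) :
    HasGradientAt (fun w => 𝔼 i, g i w) (avg g') x := by
  have hsum := HasFDerivAt.fun_sum (u := univ) fun i _ => (hg i).hasFDerivAt
  have hmean := hsum.const_mul (Fintype.card ι : ℝ)⁻¹
  simpa only [hasGradientAt_iff_hasFDerivAt, avg, map_smul, map_sum,
    Fintype.expect_eq_sum_div_card, div_eq_inv_mul] using hmean

variable [Nonempty ι]

lemma avg_sub_add_avg (a b : ι → E) : avg (fun i => a i - b i + avg b) = avg a := by
  have hcard : (Fintype.card ι : ℝ) ≠ 0 := Nat.cast_ne_zero.2 Fintype.card_ne_zero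
  simp [avg, sum_add_distrib, ← Nat.cast_smul_eq_nsmul ℝ, smul_smul, hcard]

lemma expect_norm_sub_avg_sq (a : ι → E) :
    𝔼 i, ‖a i - avg a‖ ^ 2 = 𝔼 i, ‖a i‖ ^ 2 - ‖avg a‖ ^ 2 := by
  simp only [norm_sub_sq_real, expect_add_distrib, expect_sub_distrib, ← mul_expect,
    ← inner_avg_left, real_inner_self_eq_norm_sq, Fintype.expect_const]
  ring

lemma expect_norm_sub_add_avg_sq_le {β : ℝ} (hβ : 0 < β) (a b : ι → E) :
    𝔼 i, ‖a i - b i + avg b‖ ^ 2 ≤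
      (1 + β) * 𝔼 i, ‖a i‖ ^ 2 + (1 + β⁻¹) * 𝔼 i, ‖b i‖ ^ 2 - β * ‖avg a‖ ^ 2 := by
  have hyoung : 𝔼 i, ‖a i - b i + avg b - avg a‖ ^ 2 ≤
      (1 + β) * 𝔼 i, ‖a i - avg a‖ ^ 2 + (1 + β⁻¹) * 𝔼 i, ‖b i - avg b‖ ^ 2 := by
    rw [mul_expect, mul_expect, ← expect_add_distrib]
    refine expect_le_expect fun i _ => ?_
    rw [show a i - b i + avg b - avg a = (a i - avg a) - (b i - avg b) by abel]
    exact norm_sub_sq_le_young hβ _ _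
  have hvar := expect_norm_sub_avg_sq fun i => a i - b i + avg b
  rw [avg_sub_add_avg] at hvar
  rw [hvar, expect_norm_sub_avg_sq, expect_norm_sub_avg_sq] at hyoung
  have hb : 0 ≤ (1 + β⁻¹) * ‖avg b‖ ^ 2 := by positivity
  linarith

end Average

section Saga

variable {ι E : Type*} [Fintype ι] [NormedAddCommGroup E] [InnerProductSpace ℝ E]
  {g : ι → E → ℝ} {g' : ι → E → E} {μ L : ℝ}

/-- The SAGA estimator of the average gradient at `w` when the index `j` is sampled and the memory
points are `φ`. -/
noncomputable def sagaGradient (g' : ι → E → E) (w : E) (φ : ι → E) (j : ι) : E :=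
  g' j w - g' j (φ j) + avg fun i => g' i (φ i)

/-- The SAGA Lyapunov function with reference point `s` and weight `c`. Its function-value part is
written as an average of Bregman divergences, which makes its sign visible. -/
noncomputable def sagaLyapunov (g : ι → E → ℝ) (g' : ι → E → E) (s : E) (c : ℝ) (w : E)
    (φ : ι → E) : ℝ :=
  𝔼 i, bregmanDiv (g i) (g' i) (φ i) s + c * ‖w - s‖ ^ 2

lemma sagaLyapunov_eq (g : ι → E → ℝ) (g' : ι → E → E) (s : E) (c : ℝ) (w : E) (φ : ι → E) :
    sagaLyapunov g g' s c w φ =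
      𝔼 i, g i (φ i) - 𝔼 i, g i s - 𝔼 i, ⟪g' i s, φ i - s⟫ + c * ‖w - s‖ ^ 2 := by
  simp only [sagaLyapunov, bregmanDiv, expect_sub_distrib]

lemma sagaGradient_sub_avg (g' : ι → E → E) (w s : E) (φ : ι → E) (j : ι) :
    sagaGradient g' w φ j - avg (fun i => g' i s) =
      (g' j w - g' j s) - (g' j (φ j) - g' j s) + avg fun i => g' i (φ i) - g' i s := by
  rw [sagaGradient, avg_sub]
  abel

lemma mul_sagaLyapunov_le {s w : E} {φ : ι → E} {γ ρ : ℝ} (hγ : 0 < γ)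
    (hH : 0 ≤ 𝔼 i, bregmanDiv (g i) (g' i) (φ i) s)
    (hρ_card : ρ ≤ 1 / (2 * Fintype.card ι)) (hρ_step : ρ ≤ γ * μ / 2) :
    ρ * sagaLyapunov g g' s (2 / (Fintype.card ι * γ)) w φ ≤
      ((𝔼 i, bregmanDiv (g i) (g' i) (φ i) s) / 2 + μ * ‖w - s‖ ^ 2) / Fintype.card ι := by
  set H := 𝔼 i, bregmanDiv (g i) (g' i) (φ i) s
  calc ρ * sagaLyapunov g g' s (2 / (Fintype.card ι * γ)) w φ
      = ρ * H + ρ * (2 / (Fintype.card ι * γ) * ‖w - s‖ ^ 2) := by rw [sagaLyapunov, mul_add]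
    _ ≤ 1 / (2 * Fintype.card ι) * H + γ * μ / 2 * (2 / (Fintype.card ι * γ) * ‖w - s‖ ^ 2) := by
      gcongr
    _ = (H / 2 + μ * ‖w - s‖ ^ 2) / Fintype.card ι := by field_simp

lemma expect_update {X : Type*} [DecidableEq ι] (f : ι → X → ℝ) (φ : ι → X) (j : ι) (x : X) :
    𝔼 i, f i (Function.update φ j x i) =
      𝔼 i, f i (φ i) + (f j x - f j (φ j)) / Fintype.card ι := by
  have hsingle : ∑ i, (f i (Function.update φ j x i) - f i (φ i)) = f j x - f j (φ j) := by
    rw [Fintype.sum_eq_single j fun i hi => by rw [Function.update_of_ne hi, sub_self],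
      Function.update_self]
  rw [← sub_eq_iff_eq_add', ← expect_sub_distrib, Fintype.expect_eq_sum_div_card, hsingle]

variable [Nonempty ι]

lemma expect_expect_update {X : Type*} [DecidableEq ι] (f : ι → X → ℝ) (φ : ι → X) (x : X) :
    𝔼 j, 𝔼 i, f i (Function.update φ j x i) =
      𝔼 i, f i (φ i) + (𝔼 i, f i x - 𝔼 i, f i (φ i)) / Fintype.card ι := by
  simp only [expect_update, expect_add_distrib, Fintype.expect_const, ← expect_div,
    expect_sub_distrib]

lemma expect_inner_sagaGradient_sub_avg (g' : ι → E → E) (w s x : E) (φ : ι → E) :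
    𝔼 j, ⟪sagaGradient g' w φ j - avg (fun i => g' i s), x⟫ = 𝔼 j, ⟪g' j w - g' j s, x⟫ := by
  simp only [sagaGradient_sub_avg, ← inner_avg_left, avg_sub_add_avg]

lemma mul_norm_sq_le_expect_inner
    (hsc : ∀ i u v, μ / 2 * ‖u - v‖ ^ 2 ≤ bregmanDiv (g i) (g' i) u v) (w s : E) :
    μ * ‖w - s‖ ^ 2 ≤ 𝔼 j, ⟪g' j w - g' j s, w - s⟫ :=
  le_expect univ_nonempty fun j _ => mul_norm_sq_le_inner_gradient_sub (hsc j) w s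

lemma expect_bregmanDiv_le
    (hsc : ∀ i u v, μ / 2 * ‖u - v‖ ^ 2 ≤ bregmanDiv (g i) (g' i) u v) (w s : E) :
    𝔼 j, bregmanDiv (g j) (g' j) w s ≤
      𝔼 j, ⟪g' j w - g' j s, w - s⟫ - μ / 2 * ‖w - s‖ ^ 2 := by
  rw [← Fintype.expect_const (ι := ι) (μ / 2 * ‖w - s‖ ^ 2), ← expect_sub_distrib]
  refine expect_le_expect fun j _ => ?_
  have hswap := hsc j s w
  rw [norm_sub_rev] at hswap
  linarith [bregmanDiv_add_bregmanDiv_swap (g j) (g' j) w s]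

lemma expect_norm_sagaGradient_sub_avg_sq_le {β : ℝ} (hβ : 0 < β) (hμ : 0 ≤ μ) (hμL : μ ≤ L)
    (hsc : ∀ i u v, μ / 2 * ‖u - v‖ ^ 2 ≤ bregmanDiv (g i) (g' i) u v)
    (hsmooth : ∀ i u v, bregmanDiv (g i) (g' i) u v ≤ L / 2 * ‖u - v‖ ^ 2) (w s : E) (φ : ι → E) :
    𝔼 j, ‖sagaGradient g' w φ j - avg (fun i => g' i s)‖ ^ 2 ≤
      ((1 + β) * L + μ) * 𝔼 j, ⟪g' j w - g' j s, w - s⟫ - (1 + β) * (μ * L * ‖w - s‖ ^ 2) +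
        (1 + β⁻¹) * (2 * L * 𝔼 j, bregmanDiv (g j) (g' j) (φ j) s) := by
  have hcurrent : 𝔼 j, ‖g' j w - g' j s‖ ^ 2 + μ * L * ‖w - s‖ ^ 2 ≤
      (L + μ) * 𝔼 j, ⟪g' j w - g' j s, w - s⟫ := by
    rw [← Fintype.expect_const (ι := ι) (μ * L * ‖w - s‖ ^ 2), ← expect_add_distrib, mul_expect]
    exact expect_le_expect fun j _ =>
      norm_gradient_sub_sq_add_le_inner hμL (hsc j) (hsmooth j) w s
  have hmemory : 𝔼 j, ‖g' j (φ j) - g' j s‖ ^ 2 ≤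
      2 * L * 𝔼 j, bregmanDiv (g j) (g' j) (φ j) s := by
    rw [mul_expect]
    refine expect_le_expect fun j _ => norm_gradient_sub_sq_le_bregmanDiv (hμ.trans hμL)
      (fun u v => le_trans (by positivity) (hsc j u v)) (hsmooth j) _ _
  have hmean : μ * 𝔼 j, ⟪g' j w - g' j s, w - s⟫ ≤ ‖avg fun j => g' j w - g' j s‖ ^ 2 := by
    rw [← inner_avg_left]
    refine mul_inner_le_norm_sq hμ ?_
    rw [inner_avg_left]
    exact mul_norm_sq_le_expect_inner hsc w s
  simp only [sagaGradient_sub_avg]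
  calc _ ≤ (1 + β) * 𝔼 j, ‖g' j w - g' j s‖ ^ 2 + (1 + β⁻¹) * 𝔼 j, ‖g' j (φ j) - g' j s‖ ^ 2 -
        β * ‖avg fun j => g' j w - g' j s‖ ^ 2 := expect_norm_sub_add_avg_sq_le hβ _ _
    _ ≤ (1 + β) * ((L + μ) * 𝔼 j, ⟪g' j w - g' j s, w - s⟫ - μ * L * ‖w - s‖ ^ 2) +
        (1 + β⁻¹) * (2 * L * 𝔼 j, bregmanDiv (g j) (g' j) (φ j) s) -
        β * (μ * 𝔼 j, ⟪g' j w - g' j s, w - s⟫) := by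
      gcongr; exact le_sub_iff_add_le.2 hcurrent
    _ = _ := by ring

lemma expect_norm_nearest_step_sub_sq_le {W : Set E} (hW : Convex ℝ W) {s : E} (hs : s ∈ W)
    (hopt : ∀ u ∈ W, 0 ≤ ⟪avg fun i => g' i s, u - s⟫) {w : E} {φ Θ w' : ι → E} {γ q : ℝ}
    (hγ : 0 ≤ γ) (hΘ : ∀ j, ‖Θ j‖ ≤ q) (hw' : ∀ j, w' j ∈ W)
    (hnear : ∀ j, ∀ u ∈ W, ‖w - γ • sagaGradient g' w φ j + γ • Θ j - w' j‖ ≤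
      ‖w - γ • sagaGradient g' w φ j + γ • Θ j - u‖) :
    𝔼 j, ‖w' j - s‖ ^ 2 ≤
      ‖w - s‖ ^ 2 - 2 * γ * 𝔼 j, ⟪g' j w - g' j s, w - s⟫ + 2 * γ * (q * ‖w - s‖) +
        γ ^ 2 * ((1 + q) * 𝔼 j, ‖sagaGradient g' w φ j - avg (fun i => g' i s)‖ ^ 2 +
          q * (1 + q)) := by
  calc 𝔼 j, ‖w' j - s‖ ^ 2 ≤ _ := expect_le_expect fun j _ =>
        norm_nearest_step_sub_sq_le hW hγ (hΘ j) (hw' j) (hnear j) hs hopt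
    _ = _ := by
      simp only [expect_add_distrib, expect_sub_distrib, ← mul_expect, Fintype.expect_const,
        expect_inner_sagaGradient_sub_avg]

-- The step-size condition turns the coefficient `γ² (1 + q)` of the second moment into `γ / (9 L)`;
-- Young's inequality is used with parameter `β = 8`.
lemma expect_norm_nearest_step_sub_sq_le_of_step_le {W : Set E} (hW : Convex ℝ W) {s : E}
    (hs : s ∈ W) (hopt : ∀ u ∈ W, 0 ≤ ⟪avg fun i => g' i s, u - s⟫) (hμ : 0 ≤ μ) (hL : 0 < L)
    (hμL : μ ≤ L)
    (hsc : ∀ i u v, μ / 2 * ‖u - v‖ ^ 2 ≤ bregmanDiv (g i) (g' i) u v)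
    (hsmooth : ∀ i u v, bregmanDiv (g i) (g' i) u v ≤ L / 2 * ‖u - v‖ ^ 2)
    {w : E} {φ Θ w' : ι → E} {γ q : ℝ} (hγ : 0 ≤ γ) (hstep : 9 * (1 + q) * L * γ ≤ 1)
    (hΘ : ∀ j, ‖Θ j‖ ≤ q) (hw' : ∀ j, w' j ∈ W)
    (hnear : ∀ j, ∀ u ∈ W, ‖w - γ • sagaGradient g' w φ j + γ • Θ j - w' j‖ ≤
      ‖w - γ • sagaGradient g' w φ j + γ • Θ j - u‖) :
    𝔼 j, ‖w' j - s‖ ^ 2 ≤ ‖w - s‖ ^ 2 +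
      γ / 2 * ((𝔼 j, bregmanDiv (g j) (g' j) (φ j) s) / 2 - 𝔼 j, ⟪g' j w - g' j s, w - s⟫ -
        2 * (μ * ‖w - s‖ ^ 2) + q * (4 * ‖w - s‖ + 2 / (9 * L))) := by
  have hq : 0 ≤ q := (norm_nonneg _).trans (hΘ (Classical.arbitrary ι))
  have hdist := expect_norm_nearest_step_sub_sq_le hW hs hopt hγ hΘ hw' hnear
  have hmoment := expect_norm_sagaGradient_sub_avg_sq_le (β := 8) (by norm_num) hμ hμL hsc
    hsmooth w s φ
  have hM : 0 ≤ 𝔼 j, ⟪g' j w - g' j s, w - s⟫ :=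
    le_trans (by positivity) (mul_norm_sq_le_expect_inner hsc w s)
  have hX : 0 ≤ 𝔼 j, ‖sagaGradient g' w φ j - avg (fun i => g' i s)‖ ^ 2 :=
    expect_nonneg fun _ _ => by positivity
  set d := ‖w - s‖
  set H := 𝔼 j, bregmanDiv (g j) (g' j) (φ j) s
  set M := 𝔼 j, ⟪g' j w - g' j s, w - s⟫
  set X := 𝔼 j, ‖sagaGradient g' w φ j - avg (fun i => g' i s)‖ ^ 2
  have hγq : γ * (1 + q) ≤ 1 / (9 * L) := by
    rw [le_div_iff₀ (by positivity)]
    linarith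
  have hXL : X / (9 * L) ≤ 10 / 9 * M - μ * d ^ 2 + H / 4 := by
    rw [div_le_iff₀ (by positivity)]
    linarith [mul_le_mul_of_nonneg_right hμL hM]
  calc 𝔼 j, ‖w' j - s‖ ^ 2
      ≤ d ^ 2 - 2 * γ * M + 2 * γ * (q * d) + γ * (γ * (1 + q)) * (X + q) := by linarith
    _ ≤ d ^ 2 - 2 * γ * M + 2 * γ * (q * d) + γ * (1 / (9 * L)) * (X + q) := by gcongr
    _ = d ^ 2 + γ * (X / (9 * L) - 2 * M + 2 * (q * d) + q / (9 * L)) := by ring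
    _ ≤ d ^ 2 + γ * ((10 / 9 * M - μ * d ^ 2 + H / 4) - 2 * M + 2 * (q * d) + q / (9 * L)) := by
      gcongr
    _ ≤ d ^ 2 + γ * ((H / 2 - M - 2 * (μ * d ^ 2) + q * (4 * d + 2 / (9 * L))) / 2) := by
      gcongr
      linarith [show q * (4 * d + 2 / (9 * L)) = 4 * (q * d) + 2 * (q / (9 * L)) by ring]
    _ = _ := by ring

end Saga

theorem asaga_one_step_contraction_general {ι E : Type*} [Fintype ι] [Nonempty ι] [DecidableEq ι]
    [NormedAddCommGroup E] [InnerProductSpace ℝ E] [CompleteSpace E] {μ L : ℝ} (hμ : 0 ≤ μ)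
    (hL : 0 < L) (hμL : μ ≤ L) {W : Set E} (hW : Convex ℝ W) {g : ι → E → ℝ} {g' : ι → E → E}
    (hdiff : ∀ i w, HasGradientAt (g i) (g' i w) w)
    (hsc : ∀ i u v, μ / 2 * ‖u - v‖ ^ 2 ≤ bregmanDiv (g i) (g' i) u v)
    (hlip : ∀ i u v, ‖g' i u - g' i v‖ ≤ L * ‖u - v‖)
    {s : E} (hs : s ∈ W) (hmin : IsMinOn (fun w => 𝔼 i, g i w) W s)
    {w : E} {φ Θ w' : ι → E} {γ q ρ : ℝ} (hγ : 0 < γ) (hstep : 9 * (1 + q) * L * γ ≤ 1)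
    (hΘ : ∀ j, ‖Θ j‖ ≤ q)
    (hq : q * (4 * ‖w - s‖ + 2 / (9 * L)) ≤ 3 / 2 * (μ * ‖w - s‖ ^ 2))
    (hρ_card : ρ ≤ 1 / (2 * Fintype.card ι)) (hρ_step : ρ ≤ γ * μ / 2) (hw' : ∀ j, w' j ∈ W)
    (hnear : ∀ j, ∀ u ∈ W, ‖w - γ • sagaGradient g' w φ j + γ • Θ j - w' j‖ ≤
      ‖w - γ • sagaGradient g' w φ j + γ • Θ j - u‖) :
    𝔼 j, sagaLyapunov g g' s (2 / (Fintype.card ι * γ)) (w' j) (Function.update φ j w) ≤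
      (1 - ρ) * sagaLyapunov g g' s (2 / (Fintype.card ι * γ)) w φ := by
  have hn : (0 : ℝ) < Fintype.card ι := Nat.cast_pos.2 Fintype.card_pos
  have hopt : ∀ u ∈ W, 0 ≤ ⟪avg fun i => g' i s, u - s⟫ := fun u hu =>
    inner_gradient_sub_nonneg_of_isMinOn hW (hasGradientAt_expect fun i => hdiff i s) hmin hs hu
  have hdist := expect_norm_nearest_step_sub_sq_le_of_step_le hW hs hopt hμ hL hμL hsc
    (fun i => bregmanDiv_le_of_gradient_lipschitz (hdiff i) (hlip i)) hγ.le hstep hΘ hw' hnear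
  have hK := expect_bregmanDiv_le hsc w s
  have hH : 0 ≤ 𝔼 i, bregmanDiv (g i) (g' i) (φ i) s :=
    expect_nonneg fun i _ => le_trans (by positivity) (hsc i (φ i) s)
  have hρ := mul_sagaLyapunov_le (w := w) hγ hH hρ_card hρ_step
  simp only [sagaLyapunov, expect_add_distrib, ← mul_expect,
    expect_expect_update fun i x => bregmanDiv (g i) (g' i) x s] at hρ ⊢
  set d := ‖w - s‖
  set H := 𝔼 i, bregmanDiv (g i) (g' i) (φ i) s
  set K := 𝔼 i, bregmanDiv (g i) (g' i) w s
  set M := 𝔼 j, ⟪g' j w - g' j s, w - s⟫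
  set c := 2 / (Fintype.card ι * γ) with hc
  set n : ℝ := (Fintype.card ι : ℝ)
  calc H + (K - H) / n + c * 𝔼 j, ‖w' j - s‖ ^ 2
      ≤ H + (M - μ / 2 * d ^ 2 - H) / n +
          c * (d ^ 2 + γ / 2 * (H / 2 - M - 2 * (μ * d ^ 2) + 3 / 2 * (μ * d ^ 2))) := by
        gcongr
        exact hdist.trans (by gcongr)
    _ = (H + c * d ^ 2) - (H / 2 + μ * d ^ 2) / n := by rw [hc]; field_simp; ring
    _ ≤ (1 - ρ) * (H + c * d ^ 2) := by linarith

lemma norm_le_mul_sqrt_of_forall_abs_le {ι : Type*} [Fintype ι] {θ : ℝ} (hθ : 0 ≤ θ)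
    {x : EuclideanSpace ℝ ι} (hx : ∀ k, |x k| ≤ θ) : ‖x‖ ≤ θ * √(Fintype.card ι) := by
  rw [EuclideanSpace.norm_eq]
  refine Real.sqrt_le_iff.2 ⟨by positivity, ?_⟩
  calc ∑ k, ‖x k‖ ^ 2 ≤ ∑ _k : ι, θ ^ 2 := by gcongr with k; exact hx k
    _ = (θ * √(Fintype.card ι)) ^ 2 := by
      rw [mul_pow, Real.sq_sqrt (Nat.cast_nonneg _), sum_const, card_univ, nsmul_eq_mul, mul_comm]

lemma mul_error_le_of_le_div {L θ r d m : ℝ} (hL : 0 < L) (hθ : 0 ≤ θ) (hr : 0 ≤ r) (hd : 0 ≤ d)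
    (hm : 0 ≤ m) (hle : θ ≤ m / (2 * r * (5 / (18 * L) + 2 * d))) :
    θ * r * (4 * d + 2 / (9 * L)) ≤ 3 / 2 * m := by
  have hbudget := mul_le_of_le_div₀ hm (by positivity) hle
  have hslack : 0 ≤ θ * r / L := by positivity
  calc θ * r * (4 * d + 2 / (9 * L))
      = θ * (2 * r * (5 / (18 * L) + 2 * d)) - θ * r / L / 3 := by ring
    _ ≤ 3 / 2 * m := by linarith

/-- One-step contraction of the Lyapunov function for A-SAGA
(SAGA with additive gradient errors). Averaging the Lyapunov value over the uniformly
random index `j` chosen at the iteration gives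
`(1/n)·Σ_j T(w^{t+1,j}, φ^{t+1,j}) ≤ (1 − 1/τ)·T(w^t, φ^t)`. -/
theorem asaga_one_step_contraction {D n : ℕ} (hn : 0 < n) (μ L : ℝ)
    (hμ : 0 < μ) (hμL : μ ≤ L)
    (W : Set (EuclideanSpace ℝ (Fin D)))
    (hWne : W.Nonempty) (hWcl : IsClosed W) (hWconv : Convex ℝ W)
    (g : Fin n → EuclideanSpace ℝ (Fin D) → ℝ)
    (g' : Fin n → EuclideanSpace ℝ (Fin D) → EuclideanSpace ℝ (Fin D))
    (hdiff : ∀ i w, HasGradientAt (g i) (g' i w) w)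
    (hsc : ∀ i, ∀ u v : EuclideanSpace ℝ (Fin D),
      g i u ≥ g i v + ⟪g' i v, u - v⟫ + (μ / 2) * ‖u - v‖ ^ 2)
    (hlip : ∀ i, ∀ u v : EuclideanSpace ℝ (Fin D),
      ‖g' i u - g' i v‖ ≤ L * ‖u - v‖)
    (G : EuclideanSpace ℝ (Fin D) → ℝ)
    (hG : ∀ w, G w = (1 / n : ℝ) * ∑ i, g i w)
    -- `w_*` minimizes `g` over `W`
    (wstar : EuclideanSpace ℝ (Fin D)) (hwstarW : wstar ∈ W)
    (hwstar : ∀ w ∈ W, G wstar ≤ G w)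
    -- `Π_W` is the metric (nearest-point) projection onto `W`
    (proj : EuclideanSpace ℝ (Fin D) → EuclideanSpace ℝ (Fin D))
    (hproj : ∀ v, proj v ∈ W ∧ ∀ u ∈ W, ‖v - proj v‖ ≤ ‖v - u‖)
    -- current iterate and memory points
    (wt : EuclideanSpace ℝ (Fin D)) (hwt : wt ∈ W)
    (φ : Fin n → EuclideanSpace ℝ (Fin D))
    -- gradient-error vectors, each component bounded by `θ`
    (θ : ℝ) (hθpos : 0 < θ)
    (hθ : θ ≤ min (1 / Real.sqrt D)
      (μ * ‖wt - wstar‖ ^ 2 /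
        (2 * Real.sqrt D * (5 / (18 * L) + 2 * ‖wt - wstar‖))))
    (Θ : Fin n → EuclideanSpace ℝ (Fin D))
    (hΘ : ∀ j, ∀ k : Fin D, |Θ j k| ≤ θ)
    -- the parameters of A-SAGA
    (α γ c τ : ℝ)
    (hα : α = 8)
    (hγ : γ = 1 / ((1 + α) * (1 + θ * Real.sqrt D) * L))
    (hc : c = 2 / (n * γ))
    (hτ : 1 / τ = min (1 / (2 * (n : ℝ))) (γ * μ / 2))
    -- the Lyapunov function
    (T : EuclideanSpace ℝ (Fin D) → (Fin n → EuclideanSpace ℝ (Fin D)) → ℝ)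
    (hT : ∀ w φ', T w φ' =
      (1 / n : ℝ) * ∑ i, g i (φ' i) - G wstar
        - (1 / n : ℝ) * ∑ i, ⟪g' i wstar, φ' i - wstar⟫
        + c * ‖w - wstar‖ ^ 2)
    -- the update produced when index `j` is sampled
    (φ' : Fin n → Fin n → EuclideanSpace ℝ (Fin D))
    (hφ' : ∀ j, φ' j = Function.update φ j wt)
    (v' : Fin n → EuclideanSpace ℝ (Fin D))
    (hv' : ∀ j, v' j = wt
      - γ • (g' j wt - g' j (φ j) + (1 / n : ℝ) • ∑ i, g' i (φ i))
      + γ • Θ j)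
    (w' : Fin n → EuclideanSpace ℝ (Fin D))
    (hw' : ∀ j, w' j = proj (v' j)) :
    (1 / n : ℝ) * ∑ j, T (w' j) (φ' j) ≤ (1 - 1 / τ) * T wt φ := by
  have : Nonempty (Fin n) := ⟨⟨0, hn⟩⟩
  have hL : 0 < L := hμ.trans_le hμL
  subst hα hc
  have hγpos : 0 < γ := by rw [hγ]; positivity
  have hT' : T = sagaLyapunov g g' wstar (2 / (n * γ)) := by
    funext w ψ
    simp only [hT, hG, sagaLyapunov_eq, Fintype.expect_eq_sum_div_card, Fintype.card_fin,
      one_div_mul_eq_div]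
  have hΘq (j : Fin n) : ‖Θ j‖ ≤ θ * √D := by
    simpa using norm_le_mul_sqrt_of_forall_abs_le hθpos.le (hΘ j)
  have hbudget := mul_error_le_of_le_div hL hθpos.le (Real.sqrt_nonneg D) (norm_nonneg _)
    (by positivity) (hθ.trans (min_le_right _ _))
  have hmin : IsMinOn (fun w => 𝔼 i, g i w) W wstar := fun w hw => by
    simpa [hG, Fintype.expect_eq_sum_div_card, div_eq_inv_mul] using hwstar w hw
  have hv (j : Fin n) : v' j = wt - γ • sagaGradient g' wt φ j + γ • Θ j := by
    rw [hv', sagaGradient, avg, Fintype.card_fin, one_div]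
  have hcontract := asaga_one_step_contraction_general (ρ := 1 / τ) (w' := w') hμ.le hL hμL
    hWconv hdiff (fun i u v => by rw [bregmanDiv]; linarith [hsc i u v]) hlip hwstarW hmin hγpos
    (by rw [hγ]; field_simp; norm_num) hΘq hbudget
    (by rw [hτ, Fintype.card_fin]; exact min_le_left _ _) (hτ ▸ min_le_right _ _)
    (fun j => hw' j ▸ (hproj _).1) (fun j => hv j ▸ hw' j ▸ (hproj _).2)
  simpa only [hT', hφ', Fintype.expect_eq_sum_div_card, Fintype.card_fin, one_div_mul_eq_div] using
    hcontract
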